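/- arXiv:1903.08107 — 2 statements merged into one kernel-verified Lean document; each statement's English description precedes it below -/
import Mathlib

section
/- Let R be a commutative Noetherian ring and J ⊆ R an ideal such that the local cohomology modules H⁰_J(R) and H¹_J(R) both vanish. Then for every R-linear map f : Rᵐ → Rⁿ between finite free R-modules, the kernel M = ker f satisfies H⁰_J(M) = 0 and H¹_J(M) = 0. (This is the first assertion of Proposition 4.3: for the Koszul complex K• of a sequence of polynomials Ψ₀,…,Ψ_s over the multihomogeneous coordinate ring of a product of projective spaces with irrelevant ideal B, every cycle module Z_p — being the kernel of the Koszul differential, a map of finite free modules — satisfies H⁰_B(Z_p) = H¹_B(Z_p) = 0.) -/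
/-!
Call `M` *saturated* with respect to `J` if for every `t` the map `M → Hom(J ^ t, M)`,
`x ↦ (j ↦ j • x)`, is bijective. Injectivity for all `t` is `TorsionFree J M`, surjectivity for
all `t` is `HomsAreMul J M`. The proof shows that `H⁰_J(M) = H¹_J(M) = 0` holds if and only if `M`
is saturated, and that saturation passes from `R` to the kernel of a map between finite free
modules.

The second point is elementary: a map `χ : J ^ t → ker f ⊆ Rᵐ` is, coordinatewise, multiplication
by some `y ∈ Rᵐ`; then `f y ∈ Rⁿ` is killed by `J ^ t`, hence is zero, so `y ∈ ker f`.

For the first point, local cohomology is the filtered colimit of `Extⁱ(R ⧸ J ^ t, M)`, so it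
vanishes iff each class dies at a later stage (`subsingleton_localCohomology_iff`). `Ext` is
computed from projective resolutions `P` of `R ⧸ J ^ t`, naturally in chain maps
(`isoExt_hom_naturality`). A lift `a : P₀ → R` of the augmentation and an element `e ∈ P₀` over
`1` translate between cocycles `P₁ → M` and maps `J ^ t → M`
(`exists_smul_of_coboundary`, `exists_coboundary_of_smul`). Finally, a map `χ : J ^ t → M` which is
multiplication by `m` on a smaller power of `J` is so on all of `J ^ t` when `M` is torsion-free.
-/

open CategoryTheory Limits Opposite

namespace KernelVanishing

/-! ### Naturality of the computation of `Ext` by projective resolutions -/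

theorem sq_paste {C : Type*} [Category C] {A B A₁ B₁ A₂ B₂ : C}
   (e : A ⟶ B) (p : A ⟶ A₁) (q : B ⟶ B₁)
   (b : A₁ ⟶ B₁) (u : A₂ ≅ A₁) (v : B₂ ≅ B₁) (c : A₂ ⟶ B₂)
   (h1 : e ≫ q = p ≫ b) (h2 : u.hom ≫ b = c ≫ v.hom) :
   e ≫ (q ≫ v.inv) = (p ≫ u.inv) ≫ c := by
  rw [← Category.assoc, h1, Category.assoc, Category.assoc]
  congr 1
  rw [Iso.eq_inv_comp, ← Category.assoc, h2, Category.assoc, Iso.hom_inv_id, Category.comp_id]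

variable {R : Type} [CommRing R]

/-- The map of cochain complexes `Hom(Q, M) ⟶ Hom(P, M)` given by precomposition with a chain map
`g : P ⟶ Q`. -/
noncomputable abbrev homComplexMap (M : ModuleCat.{0} R) {P Q : ChainComplex (ModuleCat.{0} R) ℕ}
    (g : P ⟶ Q) :
    Q.linearYonedaObj R M ⟶ P.linearYonedaObj R M :=
  (HomologicalComplex.unopFunctor _ _).map
    (((((linearYoneda R (ModuleCat.{0} R)).obj M).rightOp.mapHomologicalComplex _).map g).op)

theorem isoExt_hom_naturality {X Y : ModuleCat.{0} R} (f : X ⟶ Y) (P : ProjectiveResolution X)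
    (Q : ProjectiveResolution Y) (g : P.complex ⟶ Q.complex)
    (comm : g.f 0 ≫ Q.π.f 0 = P.π.f 0 ≫ f) (M : ModuleCat.{0} R) (n : ℕ) :
    ((Ext R (ModuleCat.{0} R) n).map f.op).app M ≫ (P.isoExt n M).hom =
     (Q.isoExt n M).hom ≫ HomologicalComplex.homologyMap (homComplexMap M g) n := by
  have h := congrArg Quiver.Hom.unop
    (ProjectiveResolution.isoLeftDerivedObj_inv_naturality f P Q g comm
      ((linearYoneda R (ModuleCat.{0} R)).obj M).rightOp n)
  have h2 := congrArg Quiver.Hom.unop (HomologicalComplex.homologyOp_hom_naturality (homComplexMap M g) n)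
  exact sq_paste _ _ _ _ (HomologicalComplex.homologyUnop _ _)
    (HomologicalComplex.homologyUnop _ _) _ h h2

/-! ### Vanishing of local cohomology in terms of `Ext` -/

/-- The directed system of functors `Extⁱ(R ⧸ J ^ t, -)` whose colimit is `localCohomology J i`. -/
noncomputable abbrev extSystem (J : Ideal R) (i : ℕ) :
    (ℕᵒᵖ)ᵒᵖ ⥤ ModuleCat.{0} R ⥤ ModuleCat.{0} R :=
  localCohomology.diagram (localCohomology.idealPowersDiagram J) i

theorem subsingleton_localCohomology_iff (J : Ideal R) (i : ℕ) (M : ModuleCat.{0} R) :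
   Subsingleton ((localCohomology J i).obj M) ↔
     ∀ t (x : ((extSystem J i).obj t).obj M), ∃ s, ∃ f : t ⟶ s,
       ((extSystem J i).map f).app M x = 0 := by
  have hc := isColimitOfPreserves ((evaluation _ _).obj M)
    (colimit.isColimit (extSystem J i))
  change Subsingleton
    (((evaluation _ _).obj M).mapCocone (colimit.cocone (extSystem J i))).pt ↔ _
  constructor
  · intro h t x
    obtain ⟨k, f, g, hh⟩ := Concrete.isColimit_exists_of_rep_eq _ hc (i := t) (j := t) x 0
      (h.elim _ _)
    refine ⟨k, f, hh.trans ?_⟩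
    exact map_zero (ModuleCat.Hom.hom _)
  · intro h
    refine subsingleton_of_forall_eq 0 fun y => ?_
    obtain ⟨t, x, rfl⟩ := Concrete.isColimit_exists_rep _ hc y
    obtain ⟨s, f, hf⟩ := h t x
    have := (((evaluation _ _).obj M).mapCocone
      (colimit.cocone (extSystem J i))).w f
    rw [← this]
    refine (congrArg (ModuleCat.Hom.hom _) hf).trans (map_zero (ModuleCat.Hom.hom _))

theorem subsingleton_localCohomology_of_ext (J : Ideal R) (i : ℕ) (M : ModuleCat.{0} R)
   (h : ∀ t : ℕ, Subsingleton (((Ext R (ModuleCat.{0} R) i).obj (op (ModuleCat.of R (R ⧸ J ^ t)))).obj M)) :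
   Subsingleton ((localCohomology J i).obj M) := by
  rw [subsingleton_localCohomology_iff]
  intro t x
  exact ⟨t, 𝟙 t, (@Subsingleton.elim _ (h t.unop.unop) _ _)⟩

theorem exists_ext_map_eq_zero (J : Ideal R) (i : ℕ) (M : ModuleCat.{0} R)
   (h : Subsingleton ((localCohomology J i).obj M)) (t : ℕ)
   (x : (((Ext R (ModuleCat.{0} R) i).obj (op (ModuleCat.of R (R ⧸ J ^ t)))).obj M)) :
   ∃ (s : ℕ) (hs : J ^ s ≤ J ^ t), (((Ext R (ModuleCat.{0} R) i).map (Quiver.Hom.op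
     (ModuleCat.ofHom (Submodule.mapQ _ _ LinearMap.id hs : (R ⧸ J ^ s) →ₗ[R] (R ⧸ J ^ t))))).app M) x = 0 := by
  rw [subsingleton_localCohomology_iff] at h
  obtain ⟨s, f, hf⟩ := h (op (op t)) x
  exact ⟨s.unop.unop, ((localCohomology.idealPowersDiagram J).map f.unop).down.down, hf⟩

/-- `Extⁿ(X, M) = 0` if every `n`-cocycle of `Hom(P, M)` is a coboundary. The index
`(ComplexShape.up ℕ).prev n` is `n - 1`; for `n = 0` it is `0`, and the differential is zero. -/
theorem subsingleton_ext (X M : ModuleCat.{0} R) (P : ProjectiveResolution X) (n : ℕ)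
   (h : ∀ φ : P.complex.X n ⟶ M, P.complex.d (n+1) n ≫ φ = 0 →
      ∃ ψ : P.complex.X ((ComplexShape.up ℕ).prev n) ⟶ M, P.complex.d n _ ≫ ψ = φ) :
   Subsingleton (((Ext R (ModuleCat.{0} R) n).obj (op X)).obj M) := by
  apply ModuleCat.subsingleton_of_isZero
  refine IsZero.of_iso ?_ (P.isoExt n M)
  rw [← HomologicalComplex.exactAt_iff_isZero_homology, HomologicalComplex.exactAt_iff,
    ShortComplex.moduleCat_exact_iff]
  intro φ hφ
  obtain ⟨ψ, hψ⟩ := h φ (by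
    have : (ComplexShape.up ℕ).next n = n + 1 := by simp
    change P.complex.d ((ComplexShape.up ℕ).next n) n ≫ φ = 0 at hφ
    rwa [this] at hφ)
  exact ⟨ψ, hψ⟩

/-- Each cocycle `φ : Qₙ ⟶ M` has a class `x` in `Extⁿ(Y, M)`; if the image of `x` under
`f : X ⟶ Y` vanishes, then the pullback of `φ` along a lift of `f` to resolutions is a
coboundary. -/
theorem exists_class_of_cocycle {Y : ModuleCat.{0} R} (M : ModuleCat.{0} R)
   (Q : ProjectiveResolution Y) (n : ℕ) (φ : Q.complex.X n ⟶ M)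
   (hφ : Q.complex.d (n+1) n ≫ φ = 0) :
   ∃ x : (((Ext R (ModuleCat.{0} R) n).obj (op Y)).obj M), ∀ (X : ModuleCat.{0} R) (f : X ⟶ Y)
     (P : ProjectiveResolution X), (((Ext R (ModuleCat.{0} R) n).map f.op).app M) x = 0 →
     ∃ g : P.complex ⟶ Q.complex, g.f 0 ≫ Q.π.f 0 = P.π.f 0 ≫ f ∧
       ∃ ψ : P.complex.X ((ComplexShape.up ℕ).prev n) ⟶ M, P.complex.d n _ ≫ ψ = g.f n ≫ φ := by
  let K := Q.complex.linearYonedaObj R M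
  have hφ' : (K.sc n).g φ = 0 := by
    change Q.complex.d ((ComplexShape.up ℕ).next n) n ≫ φ = 0
    have : (ComplexShape.up ℕ).next n = n + 1 := by simp
    rwa [this]
  let z : K.cycles n := (K.sc n).moduleCatCyclesIso.inv ⟨φ, hφ'⟩
  have hz : K.iCycles n z = φ := by
    have := (K.sc n).moduleCatCyclesIso_inv_iCycles
    exact congrArg (fun k => k.hom (⟨φ, hφ'⟩ : LinearMap.ker (K.sc n).g.hom)) this
  refine ⟨(Q.isoExt n M).inv (K.homologyπ n z), ?_⟩
  intro X f P h
  refine ⟨ProjectiveResolution.lift f P Q, ProjectiveResolution.lift_commutes_zero f P Q, ?_⟩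
  set g := ProjectiveResolution.lift f P Q
  let L := P.complex.linearYonedaObj R M
  have nat := isoExt_hom_naturality f P Q g (ProjectiveResolution.lift_commutes_zero f P Q) M n
  have h1 : HomologicalComplex.homologyMap (homComplexMap M g) n (K.homologyπ n z) = 0 := by
    have e1 := congrArg (fun k => k.hom ((Q.isoExt n M).inv (K.homologyπ n z))) nat
    simp only [ModuleCat.hom_comp, LinearMap.comp_apply] at e1
    have e2 : (Q.isoExt n M).hom.hom ((Q.isoExt n M).inv.hom (K.homologyπ n z)) = K.homologyπ n z := by
      simp
    rw [e2] at e1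
    refine e1.symm.trans ?_
    exact (congrArg (P.isoExt n M).hom.hom h).trans (map_zero _)
  have h2 : L.homologyπ n (HomologicalComplex.cyclesMap (homComplexMap M g) n z) = 0 := by
    have e1 := congrArg (fun k => k.hom z) (HomologicalComplex.homologyπ_naturality (homComplexMap M g) n)
    exact e1.symm.trans h1
  have ex : (ShortComplex.mk (L.toCycles ((ComplexShape.up ℕ).prev n) n) (L.homologyπ n) (by simp)).Exact :=
    ShortComplex.exact_of_g_is_cokernel _ (L.homologyIsCokernel _ n rfl)
  rw [ShortComplex.moduleCat_exact_iff] at ex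
  obtain ⟨ψ, hψ⟩ := ex _ h2
  refine ⟨ψ, ?_⟩
  have e3 := congrArg (fun k => k.hom z) (HomologicalComplex.cyclesMap_i (homComplexMap M g) n)
  have e4 := congrArg (fun k => k.hom ψ) (L.toCycles_i ((ComplexShape.up ℕ).prev n) n)
  have e5 := congrArg (L.iCycles n).hom hψ
  refine e4.symm.trans (e5.trans (e3.trans ?_))
  exact congrArg ((homComplexMap M g).f n).hom hz

/-! ### Cocycles of a presentation of `R ⧸ I` and maps out of `I` -/

section Presentations
variable {P₀ P₁ P₀' P₁' M : Type*} [AddCommGroup P₀] [AddCommGroup P₁] [AddCommGroup P₀']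
  [AddCommGroup P₁'] [AddCommGroup M] [Module R P₀] [Module R P₁] [Module R P₀'] [Module R P₁']
  [Module R M]

/-- If the cocycle attached to `φ : I → M` becomes a coboundary after pulling back along
`R ⧸ I' → R ⧸ I`, then `φ` restricted to `I'` is multiplication by an element. -/
theorem exists_smul_of_coboundary {I I' : Ideal R} (hI : I' ≤ I) (π : P₀ →ₗ[R] R ⧸ I) (d : P₁ →ₗ[R] P₀)
   (π' : P₀' →ₗ[R] R ⧸ I') (d' : P₁' →ₗ[R] P₀') (hπ' : Function.Surjective π')
   (hd' : ∀ p, π' p = 0 → ∃ q, d' q = p) (g₀ : P₀' →ₗ[R] P₀) (g₁ : P₁' →ₗ[R] P₁)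
   (hg : ∀ p, d (g₁ p) = g₀ (d' p)) (hg₀ : ∀ p, π (g₀ p) = Submodule.mapQ I' I LinearMap.id hI (π' p))
   (a : P₀ →ₗ[R] R) (ha : ∀ p, Ideal.Quotient.mk I (a p) = π p) (φ : I →ₗ[R] M)
   (ψ : P₀' →ₗ[R] M) (hψ : ∀ p (h : a (d (g₁ p)) ∈ I), ψ (d' p) = φ ⟨a (d (g₁ p)), h⟩) :
   ∃ m : M, ∀ j (hj : j ∈ I'), φ ⟨j, hI hj⟩ = j • m := by
  obtain ⟨e, he⟩ := hπ' (Ideal.Quotient.mk I' 1)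
  have hmem : a (g₀ e) - 1 ∈ I := by
    rw [← Ideal.Quotient.eq, ha, hg₀, he]
    rfl
  -- `a (g₀ e)` and `1` agree only modulo `I`; the second term corrects for the difference.
  refine ⟨ψ e - φ ⟨_, hmem⟩, fun j hj => ?_⟩
  obtain ⟨p, hp⟩ := hd' (j • e) (by
    rw [map_smul, he, ← Ideal.Quotient.mk_eq_mk, ← Submodule.Quotient.mk_smul]
    exact (Submodule.Quotient.mk_eq_zero _).2 (by simpa using hj))
  have key : a (d (g₁ p)) = j * (a (g₀ e) - 1) + j := by
    rw [hg, hp, map_smul, map_smul, smul_eq_mul]; ring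
  have hm : a (d (g₁ p)) ∈ I := by
    rw [key]; exact add_mem (I.mul_mem_left _ hmem) (hI hj)
  have h1 := hψ p hm
  have : (⟨a (d (g₁ p)), hm⟩ : I) = j • ⟨_, hmem⟩ + ⟨j, hI hj⟩ := Subtype.ext key
  rw [hp, this, map_add, map_smul, map_smul] at h1
  rw [smul_sub, h1]
  abel

/-- If every map `I → M` is multiplication by an element, then every `1`-cocycle with values in `M`
on a presentation of `R ⧸ I` is a coboundary. -/
theorem exists_coboundary_of_smul {I : Ideal R} (π : P₀ →ₗ[R] R ⧸ I) (d : P₁ →ₗ[R] P₀) (hπ : Function.Surjective π)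
   (hd : ∀ p, π p = 0 → ∃ q, d q = p) (hπd : ∀ p, π (d p) = 0)
   (a : P₀ →ₗ[R] R) (ha : ∀ p, Ideal.Quotient.mk I (a p) = π p)
   (hM : ∀ χ : I →ₗ[R] M, ∃ m : M, ∀ j, χ j = (j : R) • m)
   (φ : P₁ →ₗ[R] M) (hφ : ∀ p, d p = 0 → φ p = 0) :
   ∃ ψ : P₀ →ₗ[R] M, ∀ p, ψ (d p) = φ p := by
  obtain ⟨e, he⟩ := hπ (Ideal.Quotient.mk I 1)
  -- `φ` descends to the image of `d`, which is the kernel of `π`.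
  let φ' : LinearMap.range d →ₗ[R] M :=
    ((LinearMap.ker d).liftQ φ hφ) ∘ₗ d.quotKerEquivRange.symm.toLinearMap
  have hφ' : ∀ p, φ' ⟨d p, ⟨p, rfl⟩⟩ = φ p := fun p => by
    have : d.quotKerEquivRange.symm ⟨d p, ⟨p, rfl⟩⟩ = Submodule.Quotient.mk p := by
      rw [LinearEquiv.symm_apply_eq]; rfl
    change (LinearMap.ker d).liftQ φ hφ (d.quotKerEquivRange.symm ⟨d p, ⟨p, rfl⟩⟩) = φ p
    rw [this]
    rfl
  have hre : ∀ r : R, π (r • e) = Ideal.Quotient.mk I r := fun r => by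
    rw [map_smul, he, ← Ideal.Quotient.mk_eq_mk, ← Submodule.Quotient.mk_smul]; simp
  let χ : I →ₗ[R] M := φ' ∘ₗ LinearMap.codRestrict _ ((LinearMap.toSpanSingleton R P₀ e) ∘ₗ I.subtype)
    (fun j => hd _ (by
      simpa [hre] using Ideal.Quotient.eq_zero_iff_mem.2 j.2))
  obtain ⟨m, hm⟩ := hM χ
  let ρ : P₀ →ₗ[R] M := φ' ∘ₗ LinearMap.codRestrict _
    (LinearMap.id - (LinearMap.toSpanSingleton R P₀ e) ∘ₗ a) (fun p => hd _ (by
      simp only [LinearMap.sub_apply, LinearMap.id_apply, LinearMap.comp_apply,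
        LinearMap.toSpanSingleton_apply, map_sub, hre, ha, sub_self]))
  -- `ψ p = φ' (p - a p • e) + a p • m`, where `p - a p • e` lies in the kernel of `π`.
  refine ⟨ρ + (LinearMap.toSpanSingleton R M m) ∘ₗ a, fun p => ?_⟩
  have hj : a (d p) ∈ I := by rw [← Ideal.Quotient.eq_zero_iff_mem, ha, hπd]
  have h2 := hm ⟨_, hj⟩
  simp only [LinearMap.add_apply, LinearMap.comp_apply, LinearMap.toSpanSingleton_apply]
  rw [← h2, ← hφ']
  change φ' _ + φ' _ = φ' _
  rw [← map_add]
  congr 1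
  ext
  exact sub_add_cancel (d p) (a (d p) • e)

end Presentations

/-! ### Projective resolutions of `R ⧸ I` -/

/-- The augmentation `P₀ → R ⧸ I` of a projective resolution, as a linear map. -/
noncomputable def resπ {I : Ideal R} (P : ProjectiveResolution (ModuleCat.of R (R ⧸ I))) :
   P.complex.X 0 →ₗ[R] R ⧸ I := (P.π.f 0).hom

theorem resπ_surjective {I : Ideal R} (P : ProjectiveResolution (ModuleCat.of R (R ⧸ I))) :
    Function.Surjective (resπ P) :=
  (ModuleCat.epi_iff_surjective (P.π.f 0)).1 inferInstance

theorem resπ_comp_d {I : Ideal R} (P : ProjectiveResolution (ModuleCat.of R (R ⧸ I))) (p) :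
    resπ P ((P.complex.d 1 0).hom p) = 0 :=
  congrArg (fun k => k.hom p) P.complex_d_comp_π_f_zero

theorem resπ_exact {I : Ideal R} (P : ProjectiveResolution (ModuleCat.of R (R ⧸ I))) (p)
    (hp : resπ P p = 0) : ∃ q, (P.complex.d 1 0).hom q = p :=
  (ShortComplex.moduleCat_exact_iff _).1 P.exact₀ p hp

theorem exists_lift {I : Ideal R} (P : ProjectiveResolution (ModuleCat.of R (R ⧸ I))) :
    ∃ a : P.complex.X 0 →ₗ[R] R, ∀ p, Ideal.Quotient.mk I (a p) = resπ P p := by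
  have : Module.Projective R (P.complex.X 0) :=
    (IsProjective.iff_projective (P.complex.X 0)).2 (P.projective 0)
  obtain ⟨a, ha⟩ := Module.projective_lifting_property (Submodule.mkQ I) (resπ P)
    (Submodule.mkQ_surjective I)
  exact ⟨a, fun p => congrArg (fun k => k p) ha⟩

/-! ### Vanishing of `H⁰` and `H¹` as a saturation condition -/

/-- No nonzero element of `M` is killed by a power of `J`. -/
def TorsionFree (J : Ideal R) (M : Type) [AddCommGroup M] [Module R M] : Prop :=
  ∀ (t : ℕ) (x : M), (∀ j ∈ J ^ t, j • x = 0) → x = 0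

/-- Every linear map from a power of `J` to `M` is multiplication by an element of `M`. -/
def HomsAreMul (J : Ideal R) (M : Type) [AddCommGroup M] [Module R M] : Prop :=
  ∀ (t : ℕ) (χ : ↥(J ^ t) →ₗ[R] M), ∃ m : M, ∀ j, χ j = (j : R) • m

theorem torsionFree_of_H0 (J : Ideal R) (M : Type) [AddCommGroup M] [Module R M]
    (h : Subsingleton ((localCohomology J 0).obj (ModuleCat.of R M))) : TorsionFree J M := by
  intro t x hx
  let Q := ProjectiveResolution.of (ModuleCat.of R (R ⧸ J ^ t))
  let u : (R ⧸ J ^ t) →ₗ[R] M := Submodule.liftQ _ (LinearMap.toSpanSingleton R M x)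
    (fun j hj => hx j hj)
  obtain ⟨y, hy⟩ := exists_class_of_cocycle (ModuleCat.of R M) Q 0 (ModuleCat.ofHom (u ∘ₗ resπ Q)) (by
    ext p
    exact (congrArg u (resπ_comp_d Q p)).trans (map_zero u))
  obtain ⟨s, hs, hz⟩ := exists_ext_map_eq_zero J 0 _ h t y
  let P := ProjectiveResolution.of (ModuleCat.of R (R ⧸ J ^ s))
  obtain ⟨g, hg, ψ, hψ⟩ := hy _ _ P hz
  rw [P.complex.shape _ _ (by simp), zero_comp] at hψ
  obtain ⟨e, he⟩ := resπ_surjective P (Ideal.Quotient.mk _ 1)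
  have h1 : u (resπ Q ((g.f 0).hom e)) = 0 := (congrArg (fun k => k.hom e) hψ).symm
  have h2 : resπ Q ((g.f 0).hom e) = Submodule.mapQ _ _ LinearMap.id hs (resπ P e) :=
    congrArg (fun k => k.hom e) hg
  rw [h2, he] at h1
  have h3 : (1 : R) • x = 0 := h1
  simpa using h3

theorem H0_of_torsionFree (J : Ideal R) (M : Type) [AddCommGroup M] [Module R M] (h : TorsionFree J M) :
    Subsingleton ((localCohomology J 0).obj (ModuleCat.of R M)) := by
  refine subsingleton_localCohomology_of_ext _ _ _ fun t => ?_
  let P := ProjectiveResolution.of (ModuleCat.of R (R ⧸ J ^ t))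
  refine subsingleton_ext _ _ P 0 fun φ hφ => ⟨0, ?_⟩
  rw [comp_zero]
  symm
  have hφ' : ∀ q, φ.hom ((P.complex.d 1 0).hom q) = 0 := fun q => congrArg (fun k => k.hom q) hφ
  ext p
  refine h t _ fun j hj => ?_
  obtain ⟨q, hq⟩ := resπ_exact P (j • p) (by
    obtain ⟨r, hr⟩ := Ideal.Quotient.mk_surjective (resπ P p)
    rw [map_smul, ← hr, ← Ideal.Quotient.mk_eq_mk, ← Submodule.Quotient.mk_smul]
    exact (Submodule.Quotient.mk_eq_zero _).2 (Ideal.mul_mem_right _ _ hj))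
  have := hφ' q
  rw [hq, map_smul] at this
  exact this

theorem homsAreMul_of_H1 (J : Ideal R) (M : Type) [AddCommGroup M] [Module R M] (hT : TorsionFree J M)
    (h : Subsingleton ((localCohomology J 1).obj (ModuleCat.of R M))) : HomsAreMul J M := by
  intro t χ
  let Q := ProjectiveResolution.of (ModuleCat.of R (R ⧸ J ^ t))
  obtain ⟨a, ha⟩ := exists_lift Q
  have hmem : ∀ p, a ((Q.complex.d 1 0).hom p) ∈ J ^ t := fun p => by
    rw [← Ideal.Quotient.eq_zero_iff_mem, ha, resπ_comp_d]
  let φ : Q.complex.X 1 →ₗ[R] M :=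
    χ ∘ₗ LinearMap.codRestrict _ (a ∘ₗ (Q.complex.d 1 0).hom) hmem
  obtain ⟨y, hy⟩ := exists_class_of_cocycle (ModuleCat.of R M) Q 1 (ModuleCat.ofHom φ) (by
    ext p
    have : (Q.complex.d 1 0).hom ((Q.complex.d 2 1).hom p) = 0 :=
      congrArg (fun k => k.hom p) (Q.complex.d_comp_d 2 1 0)
    have hzero : (⟨_, hmem ((Q.complex.d 2 1).hom p)⟩ : ↥(J ^ t)) = 0 :=
      Subtype.ext ((congrArg a this).trans (map_zero a))
    exact (congrArg χ hzero).trans (map_zero χ))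
  obtain ⟨s, hs, hz⟩ := exists_ext_map_eq_zero J 1 _ h t y
  let P := ProjectiveResolution.of (ModuleCat.of R (R ⧸ J ^ s))
  obtain ⟨g, hg, hψ⟩ := hy _ _ P hz
  have e : (ComplexShape.up ℕ).prev 1 = 0 := by simp
  rw [e] at hψ
  obtain ⟨ψ, hψ⟩ := hψ
  obtain ⟨m, hm⟩ := exists_smul_of_coboundary hs (resπ Q) (Q.complex.d 1 0).hom (resπ P) (P.complex.d 1 0).hom
    (resπ_surjective P) (resπ_exact P) (g.f 0).hom (g.f 1).hom
    (fun p => congrArg (fun k => k.hom p) (g.comm 1 0))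
    (fun p => congrArg (fun k => k.hom p) hg) a ha χ ψ.hom
    (fun p _ => congrArg (fun k => k.hom p) hψ)
  -- `χ` is multiplication by `m` on `J ^ s`; torsion-freeness extends this to `J ^ t`.
  refine ⟨m, fun j => ?_⟩
  rw [← sub_eq_zero]
  refine hT s _ fun i hi => ?_
  have h1 := hm (i * j) (Ideal.mul_mem_right _ _ hi)
  have h2 : (⟨i * j, hs (Ideal.mul_mem_right _ _ hi)⟩ : ↥(J ^ t)) = i • j := rfl
  rw [h2, map_smul, mul_smul] at h1
  rw [smul_sub, h1, sub_self]

theorem H1_of_homsAreMul (J : Ideal R) (M : Type) [AddCommGroup M] [Module R M] (h : HomsAreMul J M) :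
    Subsingleton ((localCohomology J 1).obj (ModuleCat.of R M)) := by
  refine subsingleton_localCohomology_of_ext _ _ _ fun t => ?_
  let P := ProjectiveResolution.of (ModuleCat.of R (R ⧸ J ^ t))
  refine subsingleton_ext _ _ P 1 fun φ hφ => ?_
  have e : (ComplexShape.up ℕ).prev 1 = 0 := by simp
  rw [e]
  obtain ⟨a, ha⟩ := exists_lift P
  obtain ⟨ψ, hψ⟩ := exists_coboundary_of_smul (resπ P) (P.complex.d 1 0).hom (resπ_surjective P) (resπ_exact P) (resπ_comp_d P)
    a ha (h t) φ.hom (fun p hp => by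
      obtain ⟨q, hq⟩ := (ShortComplex.moduleCat_exact_iff _).1 (P.exact_succ 0) p hp
      rw [← hq]
      exact congrArg (fun k => k.hom q) hφ)
  exact ⟨ModuleCat.ofHom ψ, by ext p; exact hψ p⟩

end KernelVanishing

/-- Let `R` be a commutative Noetherian ring and `J ⊆ R` an ideal with
`H⁰_J(R) = H¹_J(R) = 0`. Then for every `R`-linear map `f : Rᵐ → Rⁿ` between finite free
`R`-modules, the kernel `M = ker f` satisfies `H⁰_J(M) = 0` and `H¹_J(M) = 0`. -/
theorem localCohomology_kernel_vanishing
    {R : Type} [CommRing R] [IsNoetherianRing R] (J : Ideal R)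
    (h0 : Subsingleton ((localCohomology J 0).obj (ModuleCat.of R R)))
    (h1 : Subsingleton ((localCohomology J 1).obj (ModuleCat.of R R)))
    (m n : ℕ) (f : (Fin m → R) →ₗ[R] (Fin n → R)) :
    Subsingleton ((localCohomology J 0).obj (ModuleCat.of R (LinearMap.ker f))) ∧
    Subsingleton ((localCohomology J 1).obj (ModuleCat.of R (LinearMap.ker f))) := by
  have hT : KernelVanishing.TorsionFree J R := KernelVanishing.torsionFree_of_H0 J R h0
  have hE : KernelVanishing.HomsAreMul J R := KernelVanishing.homsAreMul_of_H1 J R hT h1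
  have hTn : ∀ k : ℕ, KernelVanishing.TorsionFree J (Fin k → R) := fun k t x hx =>
    funext fun i => hT t (x i) fun j hj => congrFun (hx j hj) i
  refine ⟨KernelVanishing.H0_of_torsionFree J _ fun t x hx => ?_, KernelVanishing.H1_of_homsAreMul J _ fun t χ => ?_⟩
  · exact Subtype.ext (hTn m t x fun j hj => congrArg Subtype.val (hx j hj))
  · choose y hy using fun i => hE t (LinearMap.proj i ∘ₗ (LinearMap.ker f).subtype ∘ₗ χ)
    have hχ : ∀ j, (χ j : Fin m → R) = (j : R) • y := fun j => funext fun i => hy i j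
    refine ⟨⟨y, hTn n t _ fun j hj => ?_⟩, fun j => Subtype.ext (hχ j)⟩
    rw [← map_smul, ← hχ ⟨j, hj⟩]
    exact (χ ⟨j, hj⟩).2
end

section
/- Let k be a field, r ≥ 1 an integer, and let S be a commutative integral domain which is a finitely generated k-algebra equipped with a grading by ℤʳ (a GradedAlgebra structure 𝒜 : ℤʳ → Submodule k S) such that: S_μ = 0 whenever μ has a negative component; S_0 = k·1; S is generated as a k-algebra by the homogeneous components S_{e₁}, …, S_{e_r} (where e₁,…,e_r are the standard basis vectors of ℤʳ); each S_{eᵢ} is nonzero; and the Krull dimension of S is at least r + 1. Let B ⊆ S be the ideal generated by the component S_{(1,…,1)}. Then for every homogeneous element a ∈ S_α and every nonzero homogeneous element b ∈ S_β such that αᵢ < βᵢ for every i = 1,…,r, if a·Bⁿ ⊆ b·S for some natural number n, then a = 0. (This is the algebraic form of Proposition 5.2: for an irreducible reduced subscheme Z of positive dimension in a product of projective spaces ℙ^{n₁} × ⋯ × ℙ^{n_r}, with multihomogeneous coordinate ring S, one has H⁰(Z, O_Z(μ)) = 0 for every multidegree μ < 0; the degree-μ sections of O_Z are exactly the fractions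 a/b of homogeneous elements of S of degree difference μ that multiply some power of the irrelevant ideal B into S.) -/
/-!
The fraction `f = a / b` is homogeneous of degree `α - β`, all of whose coordinates are negative,
and multiplies `Bⁿ` into `S`. Suppose `a ≠ 0`, and write `V = S_{(n,…,n)}`, a finite-dimensional
space contained in `Bⁿ` because `S` is generated by the `S_{eᵢ}`
(`finite_component`, `component_le_irrelevant_pow`).

For every `c ∈ S_{β - α}` the element `f c` of the fraction field has degree `0` and maps `V` into
itself, hence it is integral over `k` (`isIntegral_section_mul`). Given `s, x ∈ S_{eᵢ}` with
`x ≠ 0`, pick a nonzero `m` of degree `β - α - eᵢ ≥ 0`; then `s / x = (f m s) / (f m x)` is a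
quotient of two elements algebraic over `k`, so it is algebraic over `k`, and therefore `s` is
integral over `k[x]`. Choosing one nonzero `xᵢ` in each `S_{eᵢ}`, it follows that `S` is integral
over the image of `k[X₁, …, X_r]`, so `dim S ≤ r` (`ringKrullDim_le_of_isIntegral_aeval`),
contradicting `dim S ≥ r + 1`.
-/

/-- By incomparability, contraction of primes along an integral ring map is strictly monotone, so
an algebra integral over the image of a polynomial ring in `r` variables has dimension at most
`r`. -/
theorem ringKrullDim_le_of_isIntegral_aeval {k S : Type*} [Field k] [CommRing S] [Algebra k S]
    {r : ℕ} (x : Fin r → S) (h : (MvPolynomial.aeval (R := k) x).toRingHom.IsIntegral) :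
    ringKrullDim S ≤ r := by
  let _ : Algebra (MvPolynomial (Fin r) k) S := (MvPolynomial.aeval (R := k) x).toRingHom.toAlgebra
  have : Algebra.IsIntegral (MvPolynomial (Fin r) k) S := ⟨h⟩
  have hle : ringKrullDim S ≤ ringKrullDim (MvPolynomial (Fin r) k) := by
    refine Order.krullDim_le_of_strictMono
      (PrimeSpectrum.comap (algebraMap (MvPolynomial (Fin r) k) S)) ?_
    intro p q hpq
    exact Ideal.IsIntegral.comap_lt_comap (R := MvPolynomial (Fin r) k) hpq
  refine hle.trans ?_
  rw [MvPolynomial.ringKrullDim_of_isNoetherianRing, ringKrullDim_eq_zero_of_field]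
  simp

section Graded

variable {k : Type*} [Field k] {r : ℕ} {S : Type*} [CommRing S] [Algebra k S]
  (𝒜 : (Fin r → ℤ) → Submodule k S)

/-- The span `S_{e₁}^{ν₁} ⋯ S_{e_r}^{ν_r}` of the monomials of multidegree `ν` in elements of the
components `S_{eᵢ}`. -/
def monomialSpan (ν : Fin r → ℕ) : Submodule k S :=
  ∏ i, 𝒜 (Pi.single i 1) ^ ν i

theorem monomialSpan_zero : monomialSpan 𝒜 0 = 1 := by
  simp [monomialSpan]

theorem monomialSpan_add (μ ν : Fin r → ℕ) :
    monomialSpan 𝒜 (μ + ν) = monomialSpan 𝒜 μ * monomialSpan 𝒜 ν := by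
  simp [monomialSpan, pow_add, Finset.prod_mul_distrib]

theorem monomialSpan_single (i : Fin r) :
    monomialSpan 𝒜 (Pi.single i 1) = 𝒜 (Pi.single i 1) := by
  unfold monomialSpan
  rw [Finset.prod_eq_single i]
  · simp
  · intro j _ hj
    simp [Pi.single_eq_of_ne hj]
  · simp

theorem mem_iSup_monomialSpan
    (hgen : Algebra.adjoin k (⋃ i : Fin r, (𝒜 (Pi.single i 1) : Set S)) = ⊤) (s : S) :
    s ∈ ⨆ ν, monomialSpan 𝒜 ν := by
  have hs : s ∈ Algebra.adjoin k (⋃ i : Fin r, (𝒜 (Pi.single i 1) : Set S)) := by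
    rw [hgen]; trivial
  induction hs using Algebra.adjoin_induction with
  | mem x hx =>
    obtain ⟨i, hi⟩ := Set.mem_iUnion.mp hx
    refine Submodule.mem_iSup_of_mem (Pi.single i 1) ?_
    rwa [monomialSpan_single]
  | algebraMap c =>
    refine Submodule.mem_iSup_of_mem 0 ?_
    rw [monomialSpan_zero]
    exact Submodule.algebraMap_mem c
  | add x y _ _ hx hy => exact add_mem hx hy
  | mul x y _ _ hx hy =>
    have hmul := Submodule.mul_mem_mul hx hy
    rw [Submodule.iSup_mul] at hmul
    refine (iSup_le fun μ => ?_ :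
      (⨆ μ, monomialSpan 𝒜 μ * ⨆ ν, monomialSpan 𝒜 ν) ≤ _) hmul
    rw [Submodule.mul_iSup]
    refine iSup_le fun ν => ?_
    rw [← monomialSpan_add]
    exact le_iSup (monomialSpan 𝒜) (μ + ν)

variable [GradedAlgebra 𝒜]

theorem component_pow_le (μ : Fin r → ℤ) (m : ℕ) : 𝒜 μ ^ m ≤ 𝒜 (m • μ) := by
  induction m with
  | zero =>
    rw [pow_zero, zero_smul, Submodule.one_le]
    exact SetLike.GradedOne.one_mem
  | succ m ih =>
    rw [pow_succ, succ_nsmul, Submodule.mul_le]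
    intro s hs t ht
    exact SetLike.mul_mem_graded (ih hs) ht

theorem prod_component_pow_le (ν : Fin r → ℕ) (F : Finset (Fin r)) :
    ∏ i ∈ F, 𝒜 (Pi.single i 1) ^ ν i ≤ 𝒜 (∑ i ∈ F, ν i • Pi.single i (1 : ℤ)) := by
  classical
  induction F using Finset.induction_on with
  | empty =>
    rw [Finset.prod_empty, Finset.sum_empty, Submodule.one_le]
    exact SetLike.GradedOne.one_mem
  | insert j F hj ih =>
    rw [Finset.prod_insert hj, Finset.sum_insert hj, Submodule.mul_le]
    intro s hs t ht
    exact SetLike.mul_mem_graded (component_pow_le 𝒜 _ _ hs) (ih ht)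

theorem sum_smul_single (ν : Fin r → ℕ) :
    ∑ i, ν i • (Pi.single i (1 : ℤ) : Fin r → ℤ) = fun i => (ν i : ℤ) := by
  ext j
  simp [Finset.sum_apply, Pi.single_apply]

theorem monomialSpan_le (ν : Fin r → ℕ) : monomialSpan 𝒜 ν ≤ 𝒜 (fun i => (ν i : ℤ)) := by
  have h := prod_component_pow_le 𝒜 ν Finset.univ
  rwa [sum_smul_single] at h

theorem component_le_monomialSpan
    (hgen : Algebra.adjoin k (⋃ i : Fin r, (𝒜 (Pi.single i 1) : Set S)) = ⊤) (ν : Fin r → ℕ) :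
    𝒜 (fun i => (ν i : ℤ)) ≤ monomialSpan 𝒜 ν := by
  intro s hs
  -- Every element of `S` has its degree `ν` component in `monomialSpan 𝒜 ν`.
  have key : ∀ t : S,
      (DirectSum.decompose 𝒜 t (fun i => (ν i : ℤ)) : S) ∈ monomialSpan 𝒜 ν := by
    intro t
    refine Submodule.iSup_induction (monomialSpan 𝒜)
      (motive := fun t => (DirectSum.decompose 𝒜 t (fun i => (ν i : ℤ)) : S) ∈ monomialSpan 𝒜 ν)
      (mem_iSup_monomialSpan 𝒜 hgen t) ?_ ?_ ?_
    · intro μ x hx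
      by_cases hμ : μ = ν
      · subst hμ
        rwa [DirectSum.decompose_of_mem_same 𝒜 (monomialSpan_le 𝒜 μ hx)]
      · rw [DirectSum.decompose_of_mem_ne 𝒜 (monomialSpan_le 𝒜 μ hx)]
        · exact zero_mem _
        · intro h
          exact hμ (funext fun i => by exact_mod_cast congrFun h i)
    · simp
    · intro x y hx hy
      rw [DirectSum.decompose_add, DirectSum.add_apply, Submodule.coe_add]
      exact add_mem hx hy
  have h := key s
  rwa [DirectSum.decompose_of_mem_same 𝒜 hs] at h

/-- `S_{(n,…,n)} = (S_{e₁} ⋯ S_{e_r})ⁿ` lies in the `n`-th power of the ideal generated by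
`S_{(1,…,1)}`. -/
theorem component_le_irrelevant_pow
    (hgen : Algebra.adjoin k (⋃ i : Fin r, (𝒜 (Pi.single i 1) : Set S)) = ⊤) (n : ℕ)
    {s : S} (hs : s ∈ 𝒜 (fun _ => (n : ℤ))) :
    s ∈ (Ideal.span (𝒜 (fun _ => 1) : Set S)) ^ n := by
  have h1 : s ∈ monomialSpan 𝒜 (fun _ => n) := component_le_monomialSpan 𝒜 hgen (fun _ => n) hs
  have h2 : monomialSpan 𝒜 (fun _ => n) = monomialSpan 𝒜 (fun _ => 1) ^ n := by
    simp [monomialSpan, Finset.prod_pow]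
  have h3 : monomialSpan 𝒜 (fun _ => 1) ≤ 𝒜 (fun _ => 1) := by
    simpa using monomialSpan_le 𝒜 (fun _ => 1)
  have h4 : s ∈ 𝒜 (fun _ => 1) ^ n := pow_le_pow_left' h3 n (h2 ▸ h1)
  have h5 : ∀ m : ℕ, 𝒜 (fun _ => 1) ^ m ≤
      ((Ideal.span (𝒜 (fun _ => 1) : Set S)) ^ m).restrictScalars k := by
    intro m
    induction m with
    | zero => intro t _; simp
    | succ m ih =>
      rw [pow_succ, Submodule.mul_le]
      intro u hu v hv
      rw [Submodule.restrictScalars_mem, pow_succ]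
      exact Ideal.mul_mem_mul (ih hu) (Ideal.subset_span hv)
  exact h5 n h4

/-- The ideal generated by `S_ν` has finitely many generators `t ∈ S_ν`; taking degree `ν` parts of
`s = ∑ cₜ t` replaces the coefficients by scalars in `S₀ = k`. -/
theorem finite_component [IsNoetherianRing S] (h0 : 𝒜 0 = Submodule.span k {(1 : S)})
    (ν : Fin r → ℤ) : (𝒜 ν).FG := by
  obtain ⟨T, hT, hspan⟩ := (Submodule.fg_span_iff_fg_span_finset_subset (R := S)
    (𝒜 ν : Set S)).mp (IsNoetherian.noetherian _)
  refine ⟨T, le_antisymm (Submodule.span_le.mpr hT) ?_⟩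
  intro s hs
  have hs' : s ∈ Submodule.span S (T : Set S) := hspan ▸ Submodule.subset_span hs
  have key : ∀ c : S, (DirectSum.decompose 𝒜 (c * s) ν : S) ∈ Submodule.span k (T : Set S) := by
    clear hs
    induction hs' using Submodule.span_induction with
    | mem x hx =>
      intro c
      have hdec := DirectSum.coe_decompose_mul_add_of_right_mem 𝒜 (i := 0) (a := c) (hT hx)
      rw [zero_add] at hdec
      have hc : (DirectSum.decompose 𝒜 c 0 : S) ∈ Submodule.span k {(1 : S)} :=
        h0 ▸ SetLike.coe_mem _
      obtain ⟨l, hl⟩ := Submodule.mem_span_singleton.mp hc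
      rw [hdec, ← hl, smul_mul_assoc, one_mul]
      exact Submodule.smul_mem _ _ (Submodule.subset_span hx)
    | zero => simp
    | add x y _ _ hx hy =>
      intro c
      rw [mul_add, DirectSum.decompose_add, DirectSum.add_apply, Submodule.coe_add]
      exact add_mem (hx c) (hy c)
    | smul d x _ ih =>
      intro c
      rw [smul_eq_mul, ← mul_assoc]
      exact ih (c * d)
  have h := key 1
  rwa [one_mul, DirectSum.decompose_of_mem_same 𝒜 hs] at h

/-- In a domain, a product of powers of nonzero elements of the `S_{eᵢ}` is a nonzero element of any
prescribed multidegree with nonnegative coordinates. -/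
theorem exists_ne_zero_mem_component [IsDomain S] (x : Fin r → S)
    (hx : ∀ i, x i ∈ 𝒜 (Pi.single i 1)) (hx0 : ∀ i, x i ≠ 0) (ν : Fin r → ℤ) (hν : ∀ i, 0 ≤ ν i) :
    ∃ m ∈ 𝒜 ν, m ≠ 0 := by
  refine ⟨∏ i, x i ^ (ν i).toNat, ?_, Finset.prod_ne_zero_iff.mpr fun i _ => pow_ne_zero _ (hx0 i)⟩
  have h := SetLike.prod_pow_mem_graded 𝒜 (fun i => Pi.single i (1 : ℤ)) x (F := Finset.univ)
    (fun i => (ν i).toNat) (fun i _ => hx i)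
  rw [sum_smul_single] at h
  have hν' : (fun i => ((ν i).toNat : ℤ)) = ν := funext fun i => Int.toNat_of_nonneg (hν i)
  rwa [hν'] at h

/-- If `a / b` carries a nonzero finite-dimensional component `S_ν` into `S`, then its product with
any `c` of the opposite degree carries `S_ν` into itself, so it is integral over `k`. -/
theorem isIntegral_section_mul [IsDomain S] {α β ν : Fin r → ℤ} {a b c : S}
    (ha : a ∈ 𝒜 α) (hb : b ∈ 𝒜 β) (hb0 : b ≠ 0) (hc : c ∈ 𝒜 (β - α))
    (hfg : (𝒜 ν).FG) (hν : 𝒜 ν ≠ ⊥) (hdiv : ∀ v ∈ 𝒜 ν, b ∣ a * v) :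
    IsIntegral k (algebraMap S (FractionRing S) a / algebraMap S (FractionRing S) b *
      algebraMap S (FractionRing S) c) := by
  have hb0' : algebraMap S (FractionRing S) b ≠ 0 := by simpa using hb0
  let φ : S →ₗ[k] FractionRing S := (IsScalarTower.toAlgHom k S (FractionRing S)).toLinearMap
  have hφ : ∀ s, φ s = algebraMap S (FractionRing S) s := fun _ => rfl
  have hinj : Function.Injective φ := IsFractionRing.injective S (FractionRing S)
  refine isIntegral_of_smul_mem_submodule ((𝒜 ν).map φ) ?_ (hfg.map φ) _ ?_
  · rwa [Ne, ← Submodule.map_bot φ, (Submodule.map_injective_of_injective hinj).eq_iff]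
  · rintro _ ⟨v, hv, rfl⟩
    obtain ⟨w, hw⟩ := hdiv v hv
    -- The quotient `w` may be replaced by its homogeneous component of degree `α + ν - β`.
    have hw' : a * v = b * (DirectSum.decompose 𝒜 w (α + ν - β) : S) := by
      have h := DirectSum.coe_decompose_mul_add_of_left_mem 𝒜 (j := α + ν - β) (b := w) hb
      rw [add_sub_cancel, ← hw,
        DirectSum.decompose_of_mem_same 𝒜 (SetLike.mul_mem_graded ha hv)] at h
      exact h
    refine ⟨c * (DirectSum.decompose 𝒜 w (α + ν - β) : S), ?_, ?_⟩
    · have h := SetLike.mul_mem_graded hc (SetLike.coe_mem (DirectSum.decompose 𝒜 w (α + ν - β)))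
      rwa [show β - α + (α + ν - β) = ν by abel] at h
    · have h := congrArg (algebraMap S (FractionRing S)) hw'
      simp only [map_mul] at h
      rw [hφ, hφ, smul_eq_mul, map_mul]
      field_simp
      linear_combination -(algebraMap S (FractionRing S) c) * h

end Graded


/-- Let `S` be a commutative domain, a finitely generated `k`-algebra,
graded by `ℤʳ` (`r ≥ 1`) in such a way that: components of multidegrees with a negative
coordinate vanish; `S₀ = k·1`; `S` is generated as a `k`-algebra by the components
`S_{e₁}, …, S_{e_r}`; each `S_{eᵢ}` is nonzero; and `dim S ≥ r + 1`. Let `B` be the ideal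
generated by the component `S_{(1,…,1)}`. If `a ∈ S_α` and `0 ≠ b ∈ S_β` with `αᵢ < βᵢ`
for all `i`, and `a·Bⁿ ⊆ b·S` for some `n`, then `a = 0`. -/
theorem no_negative_sections_of_positive_dimension
    {k : Type} [Field k] (r : ℕ) (hr : 1 ≤ r)
    {S : Type} [CommRing S] [IsDomain S] [Algebra k S] [Algebra.FiniteType k S]
    (𝒜 : (Fin r → ℤ) → Submodule k S) [GradedAlgebra 𝒜]
    (hneg : ∀ μ : Fin r → ℤ, (∃ i, μ i < 0) → 𝒜 μ = ⊥)
    (h0 : 𝒜 0 = Submodule.span k {(1 : S)})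
    (hgen : Algebra.adjoin k (⋃ i : Fin r, (𝒜 (Pi.single i 1) : Set S)) = ⊤)
    (hne : ∀ i : Fin r, 𝒜 (Pi.single i 1) ≠ ⊥)
    (hdim : ((r : WithBot ℕ∞) + 1) ≤ ringKrullDim S)
    (α β : Fin r → ℤ) (a b : S) (ha : a ∈ 𝒜 α) (hb : b ∈ 𝒜 β) (hb0 : b ≠ 0)
    (hαβ : ∀ i, α i < β i)
    (n : ℕ)
    (hdiv : ∀ x ∈ (Ideal.span (𝒜 (fun _ => 1) : Set S)) ^ n, a * x ∈ Ideal.span {b}) :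
    a = 0 := by
  by_contra ha0
  have : IsNoetherianRing S := Algebra.FiniteType.isNoetherianRing k S
  choose x hx hx0 using fun i => (Submodule.ne_bot_iff _).mp (hne i)
  have hinj : Function.Injective (algebraMap S (FractionRing S)) :=
    IsFractionRing.injective S (FractionRing S)
  have hintegral : ∀ c ∈ 𝒜 (β - α),
      IsIntegral k (algebraMap S (FractionRing S) a / algebraMap S (FractionRing S) b *
        algebraMap S (FractionRing S) c) := by
    intro c hc
    refine isIntegral_section_mul 𝒜 (ν := fun _ => (n : ℤ)) ha hb hb0 hc
      (finite_component 𝒜 h0 _) ?_ ?_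
    · rw [Submodule.ne_bot_iff]
      exact exists_ne_zero_mem_component 𝒜 x hx hx0 _ (fun _ => Int.natCast_nonneg n)
    · intro v hv
      exact Ideal.mem_span_singleton.mp (hdiv v (component_le_irrelevant_pow 𝒜 hgen n hv))
  have hratio : ∀ i, ∀ s ∈ 𝒜 (Pi.single i 1),
      IsIntegral k (algebraMap S (FractionRing S) s / algebraMap S (FractionRing S) (x i)) := by
    intro i s hs
    obtain ⟨m, hm, hm0⟩ := exists_ne_zero_mem_component 𝒜 x hx hx0 (β - α - Pi.single i 1) (by
      intro j
      have hj := hαβ j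
      by_cases hij : j = i
      · subst hij
        simp
        omega
      · simp [Pi.single_eq_of_ne hij]
        omega)
    have hmul : ∀ t ∈ 𝒜 (Pi.single i 1), m * t ∈ 𝒜 (β - α) := by
      intro t ht
      have h := SetLike.mul_mem_graded hm ht
      rwa [sub_add_cancel] at h
    have h := (hintegral _ (hmul s hs)).mul (hintegral _ (hmul _ (hx i))).inv
    have ha' : algebraMap S (FractionRing S) a ≠ 0 := (map_ne_zero_iff _ hinj).mpr ha0
    have hb' : algebraMap S (FractionRing S) b ≠ 0 := (map_ne_zero_iff _ hinj).mpr hb0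
    have hm' : algebraMap S (FractionRing S) m ≠ 0 := (map_ne_zero_iff _ hinj).mpr hm0
    rw [map_mul, map_mul, ← div_eq_mul_inv, mul_div_mul_left _ _ (div_ne_zero ha' hb'),
      mul_div_mul_left _ _ hm'] at h
    exact h
  let R := MvPolynomial (Fin r) k
  let _ : Algebra R S := (MvPolynomial.aeval (R := k) x).toRingHom.toAlgebra
  have hX : ∀ i, algebraMap R S (MvPolynomial.X i) = x i := fun i => MvPolynomial.aeval_X x i
  have : IsScalarTower k R S := IsScalarTower.of_algebraMap_eq fun l =>
    ((MvPolynomial.aeval (R := k) x).commutes l).symm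
  have : IsScalarTower k R (FractionRing S) := IsScalarTower.of_algebraMap_eq fun l => by
    rw [IsScalarTower.algebraMap_apply R S (FractionRing S), ← IsScalarTower.algebraMap_apply k R S,
      ← IsScalarTower.algebraMap_apply k S (FractionRing S)]
  have hgenint : ∀ i, ∀ s ∈ 𝒜 (Pi.single i 1), IsIntegral R s := by
    intro i s hs
    have hx' : algebraMap S (FractionRing S) (x i) ≠ 0 := (map_ne_zero_iff _ hinj).mpr (hx0 i)
    rw [← isIntegral_algebraMap_iff (B := FractionRing S) hinj]
    have h := (hratio i s hs).tower_top (A := R) |>.mul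
      (isIntegral_algebraMap (R := R) (A := FractionRing S) (x := MvPolynomial.X i))
    rwa [IsScalarTower.algebraMap_apply R S (FractionRing S), hX, div_mul_cancel₀ _ hx'] at h
  have hle : Algebra.adjoin k (⋃ i : Fin r, (𝒜 (Pi.single i 1) : Set S)) ≤
      (integralClosure R S).restrictScalars k := by
    refine Algebra.adjoin_le (Set.iUnion_subset fun i s hs => ?_)
    exact hgenint i s hs
  rw [hgen] at hle
  have hdim' : ringKrullDim S ≤ r :=
    ringKrullDim_le_of_isIntegral_aeval (k := k) x fun s => hle (Algebra.mem_top (x := s))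
  have hcontra := hdim.trans hdim'
  have hnat : r + 1 ≤ r := by exact_mod_cast hcontra
  omega
end
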